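/- Let w be a word over {0,1,2} with |w| ≥ 4 such that the word 10w01 is square-free. Then every v ∈ h(0w0) is nice. -/

import Mathlib

/-- A word is *square-free* if it contains no factor of the form `u ++ u`
with `u` nonempty. -/
def SqFree {α : Type*} (w : List α) : Prop :=
  ∀ u : List α, u ≠ [] → ¬ (u ++ u) <:+: w

/-- The word `p̂ = 1202120121021201021`. -/
def phat : List (Fin 3) := [1,2,0,2,1,2,0,1,2,1,0,2,1,2,0,1,0,2,1]

/-- The palindrome `p = mirror(p̂) ++ 0 ++ p̂`. -/
def pal : List (Fin 3) := phat.reverse ++ 0 :: phat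

/-- The number of occurrences of a (nonempty) word `u` as a factor of `v`. -/
def occCount (u v : List (Fin 3)) : ℕ :=
  (List.range v.length).countP (fun i => (v.drop i).take u.length == u)

/-- A word `v` is *nice* if `p v p` is square-free and contains exactly two
occurrences of `p̂` and exactly two occurrences of its mirror image. -/
def IsNice (v : List (Fin 3)) : Prop :=
  SqFree (pal ++ v ++ pal) ∧ occCount phat (pal ++ v ++ pal) = 2 ∧
    occCount phat.reverse (pal ++ v ++ pal) = 2

/-- `lword n` is the lexicographically least nice word of length `n`
(the empty word if no nice word of length `n` exists). -/
noncomputable def lword (n : ℕ) : List (Fin 3) := by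
  classical
  exact if h : {w : List (Fin 3) | IsNice w ∧ w.length = n}.Nonempty then
    Set.IsWF.min
      (Set.Finite.isWF
        ((List.finite_length_eq (Fin 3) n).subset (fun _ hw => hw.2))) h
  else []

/-- A set of words is *mirror-free* if it does not contain both a word and its
(distinct) mirror image. -/
def MirrorFree (S : Set (List (Fin 3))) : Prop :=
  ∀ w ∈ S, w ≠ w.reverse → w.reverse ∉ S

/-- `S` is an `n`-good set: a mirror-free set of nice words of length `n` such that
for all `i ∈ {2n+100, …, 7n}` and all distinct `u v ∈ S`, the words
`p u p v p lᵢ`, `p ū p v p lᵢ`, `p u p v̄ p l̄ᵢ` and `p ū p v̄ p l̄ᵢ` are square-free. -/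
def GoodSet (n : ℕ) (S : Set (List (Fin 3))) : Prop :=
  (∀ w ∈ S, IsNice w ∧ w.length = n) ∧ MirrorFree S ∧
    ∀ i : ℕ, 2 * n + 100 ≤ i → i ≤ 7 * n → ∀ u ∈ S, ∀ v ∈ S, u ≠ v →
      SqFree (pal ++ u ++ pal ++ v ++ pal ++ lword i) ∧
      SqFree (pal ++ u.reverse ++ pal ++ v ++ pal ++ lword i) ∧
      SqFree (pal ++ u ++ pal ++ v.reverse ++ pal ++ (lword i).reverse) ∧
      SqFree (pal ++ u.reverse ++ pal ++ v.reverse ++ pal ++ (lword i).reverse)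

/-- `mirrorIf r w` is the mirror image of `w` if `r = true`, and `w` itself otherwise. -/
def mirrorIf (r : Bool) (w : List (Fin 3)) : List (Fin 3) :=
  if r then w.reverse else w

/-- The nondeterministic substitution `h`. -/
def himg : Fin 3 → Set (List (Fin 3)) :=
  ![{[0,1,2,1,0,2,1,2,0,2,1,0,2,0,1,0,2,1,2,0,1,2,1,0],
     [0,1,2,1,0,2,1,2,0,2,1,0,2,0,1,2,0,2,1,2,0,1,2,1,0]},
    {[1,2,0,2,1,0,2,0,1,0,2,1,0,1,2,1,0,2,0,1,2,0,2,1],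
     [1,2,0,2,1,0,2,0,1,0,2,1,0,1,2,0,1,0,2,0,1,2,0,2,1]},
    {[2,0,1,0,2,1,0,1,2,1,0,2,1,2,0,2,1,0,1,2,0,1,0,2],
     [2,0,1,0,2,1,0,1,2,1,0,2,1,2,0,1,2,1,0,1,2,0,1,0,2]}]

/-- `v` is an image of `w` under the substitution `h`: `v` is obtained by replacing
each letter `c` of `w` by some word of `himg c`. -/
def IsImage (w v : List (Fin 3)) : Prop :=
  ∃ vs : List (List (Fin 3)), List.Forall₂ (fun c u => u ∈ himg c) w vs ∧ v = vs.flatten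

namespace NiceProof

inductive Sy | a0 | a1 | b0 | b1 | c0 | c1 | pp
deriving DecidableEq

open Sy

def lt : Sy → Fin 3
  | a0 => 0 | a1 => 0 | b0 => 1 | b1 => 1 | c0 => 2 | c1 => 2 | pp => 1

def blk : Sy → List (Fin 3)
  | a0 => [0,1,2,1,0,2,1,2,0,2,1,0,2,0,1,0,2,1,2,0,1,2,1,0]
  | a1 => [0,1,2,1,0,2,1,2,0,2,1,0,2,0,1,2,0,2,1,2,0,1,2,1,0]
  | b0 => [1,2,0,2,1,0,2,0,1,0,2,1,0,1,2,1,0,2,0,1,2,0,2,1]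
  | b1 => [1,2,0,2,1,0,2,0,1,0,2,1,0,1,2,0,1,0,2,0,1,2,0,2,1]
  | c0 => [2,0,1,0,2,1,0,1,2,1,0,2,1,2,0,2,1,0,1,2,0,1,0,2]
  | c1 => [2,0,1,0,2,1,0,1,2,1,0,2,1,2,0,1,2,1,0,1,2,0,1,0,2]
  | pp => [1,2,0,1,0,2,1,2,0,1,2,1,0,2,1,2,0,2,1,0,
           1,2,0,2,1,2,0,1,2,1,0,2,1,2,0,1,0,2,1]

def Fl : List Sy → List (Fin 3)
  | [] => []
  | a :: l => blk a ++ Fl l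

/-- local validity -/
def ok (a : Sy) : List Sy → Bool
  | [] => true
  | b :: l => (lt a != lt b) && (b != pp || (l.isEmpty && lt a == 0)) && (a != pp || lt b == 0)
      && (match l with
          | c :: d :: _ => (lt a != lt c || lt b != lt d)
          | _ => true)

def paths : ℕ → List (List Sy)
  | 0 => [[]]
  | k + 1 => [pp] :: [a0, a1, b0, b1, c0, c1, pp].flatMap
      fun a => ((paths k).filter (ok a)).map (a :: ·)

/-- first disagreement among the first `n` positions -/
noncomputable def diff (x : List (Fin 3)) : ℕ → List (Fin 3) → Bool :=
  List.rec (fun _ _ => false) (fun a _ ih n y =>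
    Nat.rec false (fun n _ => List.rec false (fun b y _ =>
      Bool.rec (ih n y) true (a != b)) y) n) x

def blen (l : List Sy) : ℕ := (l.head?.elim 0 fun b => (blk b).length)

def force {β : Type} : List Sy → (List Sy → β) → β
  | [], k => k []
  | a :: l, k => force l fun l' => k (a :: l')

def forceF {β : Type} : List (Fin 3) → (List (Fin 3) → β) → β
  | [], k => k []
  | a :: l, k => forceF l fun l' => k (a :: l')

/-- checks `f` on the first `n` nonempty tails -/
noncomputable def tls (n : ℕ) : ℕ → List (Fin 3) → (ℕ → List (Fin 3) → Bool) → Bool :=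
  Nat.rec (fun _ _ _ => true) (fun _ ih q x f =>
    Bool.rec false (List.rec (ih (Nat.succ q) [] f) (fun _ y _ => ih (Nat.succ q) y f) x) (f q x)) n

/-- checks `f` on the first `n` pairs of tails -/
noncomputable def tls2 (n : ℕ) : List (Fin 3) → List (Fin 3) →
    (List (Fin 3) → List (Fin 3) → Bool) → Bool :=
  Nat.rec (fun _ _ _ => true) (fun _ ih x y f =>
    Bool.rec false (List.rec (List.rec (ih [] [] f) (fun _ y _ => ih [] y f) y)
      (fun _ x _ => List.rec (ih x [] f) (fun _ y _ => ih x y f) y) x) (f x y)) n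

noncomputable def chkSq (k lo cnt : ℕ) : Bool :=
  (paths k).all fun l => force l fun l => forceF (Fl l) fun z => forceF (z.drop lo) fun z' =>
    tls2 (blen l) z z' fun x y =>
      tls cnt lo y fun q y => Bool.rec
        (decide (x.length < min (24 * (k - 1)) (2 * q))) true (diff x q y)

def bw : List (List (Fin 3)) :=
  [[0,1,0,2,1,2,0,1,2,1,0,1,2,0,1],
   [0,1,0,2,1,2,0,1,2,1,0,1,2,0,2],
   [0,1,0,2,1,2,0,1,2,1,0,2,0,1,0],
   [0,1,2,1,0,1,2,0,1,0,2,0,1,2,1],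
   [0,1,2,1,0,1,2,0,1,0,2,1,2,0,2],
   [1,2,0,2,1,2,0,1,2,1,0,1,2,0,1],
   [1,2,0,2,1,2,0,1,2,1,0,1,2,0,2],
   [1,2,0,2,1,2,0,1,2,1,0,2,0,1,0],
   [1,2,1,0,2,0,1,2,0,2,1,0,1,2,1],
   [1,2,1,0,2,0,1,2,0,2,1,2,0,1,0],
   [2,0,1,0,2,0,1,2,0,2,1,0,1,2,1],
   [2,0,1,0,2,0,1,2,0,2,1,2,0,1,0],
   [2,0,2,1,0,1,2,0,1,0,2,0,1,2,1],
   [2,0,2,1,0,1,2,0,1,0,2,1,2,0,2],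
   [2,1,0,2,1,2,0,1,0,2,1,0,1,2,1]]

def isB (x : List (Fin 3)) : Bool := bw.any fun y => y == x

noncomputable def chkB : Bool :=
  (paths 2).all fun l => force l fun l => forceF (Fl l) fun y =>
    tls (blen l) 0 y fun r x => decide (x.length < 15) ||
      forceF (x.take 15) fun z => (isB z == decide (r + 11 = blen l))

noncomputable def chkO (u : List (Fin 3)) (o : ℕ) : Bool :=
  (paths 2).all fun l => force l fun l => forceF (Fl l) fun y =>
    tls (blen l) 0 y fun r x =>
      (x.take 19 == u) == decide (l.head? = some pp ∧ r = o)

theorem cO1 : chkO phat 20 = true := by decide +kernel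
theorem cO2 : chkO phat.reverse 0 = true := by decide +kernel
theorem cB : chkB = true := by decide +kernel
theorem cS1 : chkSq 2 1 12 = true := by decide +kernel
theorem cS2 : chkSq 3 13 17 = true := by decide +kernel
theorem cS3 : chkSq 4 30 13 = true := by decide +kernel

theorem force_eq {β : Type} (l : List Sy) (k : List Sy → β) : force l k = k l := by
  induction l generalizing k with
  | nil => rfl
  | cons a l ih => simp [force, ih]

theorem forceF_eq {β : Type} (l : List (Fin 3)) (k : List (Fin 3) → β) : forceF l k = k l := by
  induction l generalizing k with
  | nil => rfl
  | cons a l ih => simp [forceF, ih]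

theorem tls_spec (f : ℕ → List (Fin 3) → Bool) (n : ℕ) : ∀ (q : ℕ) (x : List (Fin 3)),
    tls n q x f = true → ∀ r < n, f (q + r) (x.drop r) = true := by
  induction n with
  | zero => intro q x _ r hr; omega
  | succ n ih =>
    intro q x h r hr
    have h1 : f q x = true ∧ tls n (q + 1) x.tail f = true := by
      have h' : (Bool.rec false (List.rec (tls n (Nat.succ q) [] f)
        (fun _ y _ => tls n (Nat.succ q) y f) x) (f q x) : Bool) = true := h
      cases hf : f q x with
      | false => rw [hf] at h'; exact absurd h' (by simp)
      | true =>
        rw [hf] at h'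
        refine ⟨rfl, ?_⟩
        cases x with
        | nil => exact h'
        | cons a x => exact h'
    rcases r with _ | r
    · simpa using h1.1
    · have := ih _ _ h1.2 r (by omega)
      rw [List.drop_tail] at this
      rw [show q + (r + 1) = q + 1 + r by omega]
      exact this

theorem tls2_spec (f : List (Fin 3) → List (Fin 3) → Bool) (n : ℕ) : ∀ (x y : List (Fin 3)),
    tls2 n x y f = true → ∀ r < n, f (x.drop r) (y.drop r) = true := by
  induction n with
  | zero => intro q x _ r hr; omega
  | succ n ih =>
    intro x y h r hr
    have h1 : f x y = true ∧ tls2 n x.tail y.tail f = true := by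
      have h' : (Bool.rec false (List.rec (List.rec (tls2 n [] [] f) (fun _ y _ => tls2 n [] y f) y)
        (fun _ x _ => List.rec (tls2 n x [] f) (fun _ y _ => tls2 n x y f) y) x) (f x y) : Bool)
          = true := h
      cases hf : f x y with
      | false => rw [hf] at h'; exact absurd h' (by simp)
      | true =>
        rw [hf] at h'
        refine ⟨rfl, ?_⟩
        cases x <;> cases y <;> exact h'
    rcases r with _ | r
    · simpa using h1.1
    · have := ih _ _ h1.2 r (by omega)
      rw [List.drop_tail, List.drop_tail] at this
      exact this

theorem diff_spec (x : List (Fin 3)) : ∀ (n : ℕ) (y : List (Fin 3)), diff x n y = true →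
    ∃ t < n, ∃ a b, x[t]? = some a ∧ y[t]? = some b ∧ a ≠ b := by
  induction x with
  | nil => intro n y h; exact absurd (show false = true from h) (by simp)
  | cons a x ih =>
    intro n y h
    rcases n with _ | n
    · exact absurd (show false = true from h) (by simp)
    rcases y with _ | ⟨b, y⟩
    · exact absurd (show false = true from h) (by simp)
    have h' : (Bool.rec (diff x n y) true (a != b) : Bool) = true := h
    cases hf : (a != b) with
    | false =>
      rw [hf] at h'
      obtain ⟨t, ht, c, d, h1, h2, h3⟩ := ih n y h'
      exact ⟨t + 1, by omega, c, d, by simpa using h1, by simpa using h2, h3⟩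
    | true =>
      exact ⟨0, by omega, a, b, by simp, by simp, by simpa using hf⟩

theorem chkSq_spec {k lo cnt : ℕ} (h : chkSq k lo cnt = true) {l : List Sy} (hl : l ∈ paths k)
    {r : ℕ} (hr : r < blen l) {q : ℕ} (h1 : lo ≤ q) (h2 : q < lo + cnt) :
    (∃ t < q, ∃ a b, (Fl l)[r + t]? = some a ∧ (Fl l)[r + q + t]? = some b ∧ a ≠ b) ∨
      (Fl l).length - r < min (24 * (k - 1)) (2 * q) := by
  have h := (List.all_eq_true.1 h) l hl
  simp only [force_eq, forceF_eq] at h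
  have h := tls2_spec _ _ _ _ h r hr
  have h := tls_spec _ _ _ _ h (q - lo) (by omega)
  rw [show lo + (q - lo) = q by omega] at h
  simp only [List.drop_drop] at h
  rw [show lo + r + (q - lo) = r + q by omega] at h
  cases hd : diff ((Fl l).drop r) q ((Fl l).drop (r + q)) with
  | false =>
    rw [hd] at h
    right
    have := of_decide_eq_true h
    simpa using this
  | true =>
    left
    obtain ⟨t, ht, a, b, h1, h2, h3⟩ := diff_spec _ _ _ hd
    refine ⟨t, ht, a, b, ?_, ?_, h3⟩
    · simpa using h1
    · simpa using h2

theorem chkB_spec {l : List Sy} (hl : l ∈ paths 2)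
    {r : ℕ} (hr : r < blen l) (h2 : r + 15 ≤ (Fl l).length) :
    isB (((Fl l).drop r).take 15) = true ↔ r + 11 = blen l := by
  have h := (List.all_eq_true.1 cB) l hl
  simp only [force_eq, forceF_eq] at h
  have h := tls_spec _ _ _ _ h r hr
  simp only [Bool.or_eq_true, decide_eq_true_eq, List.length_drop, beq_iff_eq, zero_add] at h
  rcases h with h | h
  · omega
  · rw [h]; simp

theorem chkO_spec {u : List (Fin 3)} {o : ℕ} (h : chkO u o = true) {l : List Sy} (hl : l ∈ paths 2)
    {r : ℕ} (hr : r < blen l) :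
    ((Fl l).drop r).take 19 = u ↔ (l.head? = some pp ∧ r = o) := by
  have h := (List.all_eq_true.1 h) l hl
  simp only [force_eq, forceF_eq] at h
  have h := tls_spec _ _ _ _ h r hr
  simp only [beq_iff_eq, zero_add] at h
  rw [← beq_iff_eq, h]; simp

theorem Fl_append (A C : List Sy) : Fl (A ++ C) = Fl A ++ Fl C := by
  induction A with
  | nil => rfl
  | cons a A ih => simp [Fl, ih]

theorem blk_len (a : Sy) : 24 ≤ (blk a).length ∧ (blk a).length ≤ 39 ∧
    (a ≠ pp → (blk a).length ≤ 25) := by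
  cases a <;> simp [blk]

theorem Fl_len (l : List Sy) : 24 * l.length ≤ (Fl l).length := by
  induction l with
  | nil => simp [Fl]
  | cons a l ih => have := blk_len a; simp [Fl]; omega

theorem locate (s : List Sy) : ∀ i < (Fl s).length,
    ∃ A b C r, s = A ++ b :: C ∧ r < (blk b).length ∧ i = (Fl A).length + r := by
  induction s with
  | nil => intro i hi; simp [Fl] at hi
  | cons a s ih =>
    intro i hi
    by_cases h : i < (blk a).length
    · exact ⟨[], a, s, i, rfl, h, by simp [Fl]⟩
    · obtain ⟨A, b, C, r, h1, h2, h3⟩ := ih (i - (blk a).length) (by simp [Fl] at hi; omega)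
      exact ⟨a :: A, b, C, r, by simp [h1], h2, by simp [Fl]; omega⟩

structure Good (s : List Sy) : Prop where
  hpp : ∀ A b C, s = A ++ b :: C → (b = pp ↔ A = [] ∨ C = [])
  hsq : SqFree (s.map lt)
  hlet : ∃ w, s.map lt = 1 :: 0 :: (w ++ [0, 1])

theorem Good.ok {s : List Sy} (hs : Good s) {A : List Sy} {b c : Sy} {E : List Sy}
    (h : s = A ++ b :: c :: E) (k : ℕ) : ok b (c :: E.take k) = true := by
  have e1 : lt b ≠ lt c := by
    intro e
    apply hs.hsq [lt b] (by simp)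
    rw [h]
    exact ⟨A.map lt, E.map lt, by simp [e]⟩
  have e2 : c = pp → E = [] ∧ lt b = 0 := by
    intro e
    have hE : E = [] := by
      have := (hs.hpp (A ++ [b]) c E (by simp [h])).1 e
      simpa using this
    refine ⟨hE, ?_⟩
    obtain ⟨w, hw⟩ := hs.hlet
    rw [h, hE] at hw
    have : A.map lt ++ [lt b, lt c] = (1 :: 0 :: w) ++ [0, 1] := by simpa using hw
    have := (List.append_inj' this rfl).2
    simp at this
    exact this.1
  have e3 : b = pp → lt c = 0 := by
    intro e
    have hA : A = [] := by
      have := (hs.hpp A b (c :: E) h).1 e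
      simpa using this
    obtain ⟨w, hw⟩ := hs.hlet
    rw [h, hA] at hw
    simp at hw
    exact hw.2.1
  have e4 : ∀ d e E', E = d :: e :: E' → ¬ (lt b = lt d ∧ lt c = lt e) := by
    rintro d e E' rfl ⟨h1, h2⟩
    apply hs.hsq [lt b, lt c] (by simp)
    rw [h]
    exact ⟨A.map lt, E'.map lt, by simp [h1, h2]⟩
  have e5 : ∀ d e E', E.take k = d :: e :: E' → ¬ (lt b = lt d ∧ lt c = lt e) := by
    intro d e E' h'
    apply e4 d e (E' ++ E.drop k)
    conv_lhs => rw [← List.take_append_drop k E, h']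
    simp
  unfold NiceProof.ok
  simp only [Bool.and_eq_true, Bool.or_eq_true, bne_iff_ne, beq_iff_eq, ne_eq, List.isEmpty_iff]
  refine ⟨⟨⟨e1, ?_⟩, ?_⟩, ?_⟩
  · by_cases h : c = pp
    · right; exact ⟨by simp [(e2 h).1], (e2 h).2⟩
    · left; exact h
  · by_cases h : b = pp
    · right; exact e3 h
    · left; exact h
  · split
    · rename_i d e E' hh
      have := e5 _ _ _ hh
      simp only [Bool.or_eq_true, bne_iff_ne, ne_eq]
      tauto
    · rfl

theorem Good.path {s : List Sy} (hs : Good s) (k : ℕ) : ∀ (A C : List Sy), s = A ++ C → C ≠ [] →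
    C.take k ∈ paths k := by
  induction k with
  | zero => intro A C _ _; simp [paths]
  | succ k ih =>
    intro A C h hC
    rcases C with _ | ⟨b, D⟩
    · exact absurd rfl hC
    rcases D with _ | ⟨c, E⟩
    · have : b = pp := (hs.hpp A b [] h).2 (Or.inr rfl)
      simp [paths, this]
    · have h1 := ih (A ++ [b]) (c :: E) (by simp [h]) (by simp)
      have h2 : NiceProof.ok b ((c :: E).take k) = true := by
        rcases k with _ | k
        · rfl
        · exact hs.ok h k
      rw [paths, List.mem_cons]
      right
      rw [List.mem_flatMap]
      refine ⟨b, by cases b <;> simp, ?_⟩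
      rw [List.mem_map]
      exact ⟨_, List.mem_filter.2 ⟨h1, h2⟩, by simp⟩

/-- position `i` in block `b`, local path -/
theorem local_split (A : List Sy) (b : Sy) (C : List Sy) (k : ℕ) :
    ∃ l rest, l = (b :: C).take (k + 1) ∧ l.head? = some b ∧ blen l = (blk b).length ∧
      Fl (A ++ b :: C) = Fl A ++ (Fl l ++ Fl rest) ∧ 
      (rest = [] ∨ (blk b).length + 24 * k ≤ (Fl l).length) := by
  refine ⟨(b :: C).take (k + 1), (b :: C).drop (k + 1), rfl, by simp, by simp [blen], ?_, ?_⟩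
  · rw [← Fl_append ((b :: C).take (k + 1)), List.take_append_drop, Fl_append]
  · by_cases h : C.length ≤ k
    · left; simp [h]
    · right
      simp only [List.take_succ_cons, Fl, List.length_append]
      have := Fl_len (C.take k)
      rw [List.length_take] at this
      rw [min_eq_left (by omega)] at this
      omega

theorem take_drop_local {α : Type*} (X Y Z : List α) (r m : ℕ) (h : Z = [] ∨ r + m ≤ Y.length) :
    ((X ++ (Y ++ Z)).drop (X.length + r)).take m = (Y.drop r).take m := by
  rw [← List.drop_drop, List.drop_left]
  rcases h with h | h
  · simp [h]
  · rw [List.drop_append_of_le_length (by omega), List.take_append_of_le_length (by simp; omega)]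

/-- Short squares. -/
theorem no_short {s : List Sy} (hs : Good s) {i q : ℕ} (hq0 : 1 ≤ q) (hq : q ≤ 42)
    (hi : i + 2 * q ≤ (Fl s).length) (h : ∀ t < q, (Fl s)[i + t]? = (Fl s)[i + q + t]?) : False := by
  obtain ⟨A, b, C, r, hsA, hr, hir⟩ := locate s i (by omega)
  have key : ∀ k lo cnt, chkSq (k + 1) lo cnt = true → lo ≤ q → q < lo + cnt → False := by
    intro k lo cnt hc h1 h2
    obtain ⟨l, rest, hl, -, hbl, hF, hrest⟩ := local_split A b C k
    have hp := hs.path (k + 1) A (b :: C) hsA (by simp)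
    rw [← hl] at hp
    rw [← hsA] at hF
    have get : ∀ j a, (Fl l)[r + j]? = some a → (Fl s)[i + j]? = some a := by
      intro j a ha
      rw [hF, hir, List.getElem?_append_right (by omega),
        show (Fl A).length + r + j - (Fl A).length = r + j by omega,
        List.getElem?_append_left, ha]
      exact (List.getElem?_eq_some_iff.1 ha).1
    rcases chkSq_spec hc hp (by rw [hbl]; exact hr) h1 h2 with ⟨t, ht, a, c, ha, hb, hne⟩ | hlt
    · have g1 := get t a ha
      have g2 := get (q + t) c (by rw [← add_assoc]; exact hb)
      have := h t ht
      rw [g1, add_assoc, g2] at this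
      exact hne (by simpa using this)
    · have hlen := congrArg List.length hF
      simp at hlen
      rcases hrest with e | e
      · subst e; simp [Fl] at hlen; omega
      · simp at hlt; omega
  by_cases q1 : q ≤ 12
  · exact key 1 1 12 cS1 (by omega) (by omega)
  by_cases q2 : q ≤ 29
  · exact key 2 13 17 cS2 (by omega) (by omega)
  · exact key 3 30 13 cS3 (by omega) (by omega)

theorem abs_lemma {α : Type*} (V W : ℕ → α) (β : ℕ → ℕ) (n N : ℕ) (h0 : β 0 = 0) (hn : β n = N)
    (hg : ∀ k < n, β k + 24 ≤ β (k + 1)) (hg2 : ∀ k < n, β (k + 1) ≤ β k + 39)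
    (hg3 : ∀ k, 1 ≤ k → k + 1 < n → β (k + 1) ≤ β k + 25)
    (hW1 : ∀ k < n, V (β k) = W k) (hW2 : ∀ k < n, V (β (k + 1) - 1) = W k)
    (hsync : ∀ j j', 11 ≤ j → j + 4 ≤ N → 11 ≤ j' → j' + 4 ≤ N →
      (∀ t < 15, V (j - 11 + t) = V (j' - 11 + t)) → (∃ k ≤ n, β k = j) → ∃ k ≤ n, β k = j')
    (hsf : ∀ a m, 0 < m → a + 2 * m ≤ n → ¬ ∀ t < m, W (a + t) = W (a + m + t))
    (i q : ℕ) (hq : 43 ≤ q) (hi : i + 2 * q ≤ N) (hp : ∀ t < q, V (i + t) = V (i + q + t)) :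
    False := by
  have mono : ∀ a d, a + d ≤ n → β a + 24 * d ≤ β (a + d) := by
    intro a d
    induction d with
    | zero => intro _; simp
    | succ d ih =>
      intro h
      have := ih (by omega)
      have := hg (a + d) (by omega)
      rw [← add_assoc]
      omega
  have mono' : ∀ a b, a ≤ b → b ≤ n → β a + 24 * (b - a) ≤ β b := by
    intro a b h1 h2
    have := mono a (b - a) (by omega)
    rwa [show a + (b - a) = b by omega] at this
  have inv : ∀ a b, a ≤ n → b ≤ n → β a < β b → a < b := by
    intro a b h1 h2 h3
    by_contra h
    have := mono' b a (by omega) h1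
    omega
  have hp' : ∀ j, i ≤ j → j < i + q → V j = V (j + q) := by
    intro j h1 h2
    have := hp (j - i) (by omega)
    rw [show i + (j - i) = j by omega, show i + q + (j - i) = j + q by omega] at this
    exact this
  have fwd : ∀ k ≤ n, i + 11 ≤ β k → β k + 4 ≤ i + q → ∃ k' ≤ n, β k' = β k + q := by
    intro k hk h1 h2
    refine hsync (β k) (β k + q) (by omega) (by omega) (by omega) (by omega) ?_ ⟨k, hk, rfl⟩
    intro t ht
    rw [hp' _ (by omega) (by omega)]
    congr 1; omega
  have bwd : ∀ k ≤ n, i + q + 11 ≤ β k → β k + 4 ≤ i + 2 * q → ∃ k' ≤ n, β k' = β k - q := by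
    intro k hk h1 h2
    refine hsync (β k) (β k - q) (by omega) (by omega) (by omega) (by omega) ?_ ⟨k, hk, rfl⟩
    intro t ht
    rw [hp' (β k - q - 11 + t) (by omega) (by omega)]
    congr 1; omega
  have hex : ∃ k, k ≤ n ∧ i + 11 ≤ β k := ⟨n, le_rfl, by omega⟩
  classical
  obtain ⟨k, ⟨hkn, hk1⟩, hkmin⟩ : ∃ k, (k ≤ n ∧ i + 11 ≤ β k) ∧
      ∀ m < k, ¬ (m ≤ n ∧ i + 11 ≤ β m) :=
    ⟨Nat.find hex, Nat.find_spec hex, fun m hm => Nat.find_min hex hm⟩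
  have hk0 : 1 ≤ k := by
    rcases Nat.eq_zero_or_pos k with h | h
    · subst h; omega
    · exact h
  have hkm : β (k - 1) < i + 11 := by
    have := hkmin (k - 1) (by omega)
    by_contra h
    exact this ⟨by omega, by omega⟩
  have hk2 : β k + 4 ≤ i + q := by
    by_contra hc
    have e1 := hg2 (k - 1) (by omega)
    rw [show k - 1 + 1 = k by omega] at e1
    by_cases c1 : k = 1
    · subst c1; simp at *; omega
    by_cases c2 : k = n
    · subst c2; omega
    have e2 := hg3 (k - 1) (by omega) (by omega)
    rw [show k - 1 + 1 = k by omega] at e2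
    omega
  obtain ⟨k', hk'n, hk'⟩ := fwd k hkn hk1 hk2
  obtain ⟨l, hln, hl1, hlmax⟩ : ∃ l, l ≤ n ∧ β l + 4 ≤ i + q ∧
      ∀ m, m ≤ n → β m + 4 ≤ i + q → m ≤ l := by
    refine ⟨Nat.findGreatest (fun m => β m + 4 ≤ i + q) n, Nat.findGreatest_le n, ?_, ?_⟩
    · exact Nat.findGreatest_spec (P := fun m => β m + 4 ≤ i + q) hkn hk2
    · intro m h1 h2
      exact Nat.le_findGreatest h1 h2
  have hkl : k ≤ l := hlmax k hkn hk2
  have hlt : l < n := by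
    rcases Nat.lt_or_ge l n with h | h
    · exact h
    · have : l = n := by omega
      subst this; omega
  have ind : ∀ m, k + m ≤ l → k' + m ≤ n ∧ β (k' + m) = β (k + m) + q := by
    intro m
    induction m with
    | zero => intro _; exact ⟨hk'n, hk'⟩
    | succ m ih =>
      intro h
      obtain ⟨i1, i2⟩ := ih (by omega)
      have a1 := mono' (k + (m + 1)) l h hln
      have a2 := mono' k (k + (m + 1)) (by omega) (by omega)
      have a22 := mono' k (k + m) (by omega) (by omega)
      have a3 := hg (k + m) (by omega)
      rw [add_assoc] at a3
      obtain ⟨x, hx, hx2⟩ := fwd (k + (m + 1)) (by omega) (by omega) (by omega)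
      have hx3 := inv (k' + m) x i1 hx (by omega)
      have a4 := mono' (k' + (m + 1)) x (by omega) hx
      have a5 := hg (k' + m) (by omega)
      rw [add_assoc] at a5
      refine ⟨by omega, ?_⟩
      obtain ⟨y, hy, hy2⟩ := bwd (k' + (m + 1)) (by omega) (by omega) (by omega)
      have hy3 := inv (k + m) y (by omega) hy (by omega)
      have a6 := mono' (k + (m + 1)) y (by omega) hy
      omega
  have hk'l : l < k' := inv l k' hln hk'n (by omega)
  have hk'u : k' ≤ l + 2 := by
    by_contra hc
    have b1 : β (k' - 1) < i + q + 11 := by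
      by_contra hc2
      have b2 := mono' (k' - 1) k' (by omega) hk'n
      obtain ⟨y, hy, hy2⟩ := bwd (k' - 1) (by omega) (by omega) (by omega)
      have := inv y k hy hkn (by omega)
      exact hkmin y this ⟨hy, by omega⟩
    have b3 : i + q < β (l + 1) + 4 := by
      by_contra hc2
      have := hlmax (l + 1) (by omega) (by omega)
      omega
    have b4 := mono' (l + 1) (k' - 1) (by omega) (by omega)
    omega
  have hend := ind (l - k) (by omega)
  rw [show k + (l - k) = l by omega] at hend
  have hendn : k' + (l - k) < n := by
    rcases Nat.lt_or_ge (k' + (l - k)) n with h | h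
    · exact h
    · have : k' + (l - k) = n := by omega
      rw [this] at hend; omega
  have hWeq : ∀ m, k + m ≤ l → W (k + m) = W (k' + m) := by
    intro m hm
    have a1 := mono' (k + m) l hm hln
    have a2 := mono' k (k + m) (by omega) (by omega)
    rw [← hW1 (k + m) (by omega), ← hW1 (k' + m) (by omega), (ind m hm).2]
    exact hp' _ (by omega) (by omega)
  have hWm : W (k - 1) = W (k' - 1) := by
    rw [← hW2 (k - 1) (by omega), ← hW2 (k' - 1) (by omega), show k - 1 + 1 = k by omega,
      show k' - 1 + 1 = k' by omega, hk', hp' _ (by omega) (by omega)]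
    congr 1; omega
  have hall : ∀ t, k + t ≤ l + 1 → W (k - 1 + t) = W (k' - 1 + t) := by
    intro t ht
    rcases t with _ | t
    · exact hWm
    · have := hWeq t (by omega)
      rw [show k - 1 + (t + 1) = k + t by omega, show k' - 1 + (t + 1) = k' + t by omega]
      exact this
  rcases (show k' = l + 1 ∨ k' = l + 2 by omega) with h | h
  · refine hsf (k - 1) (l - k + 1) (by omega) (by omega) ?_
    intro t ht
    rw [hall t (by omega)]
    congr 1; omega
  · refine hsf (k - 1) (l - k + 2) (by omega) (by omega) ?_
    intro t ht
    rw [hall t (by omega)]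
    congr 1; omega

theorem Good.isB_iff {s : List Sy} (hs : Good s) {A : List Sy} {b : Sy} {C : List Sy}
    (h : s = A ++ b :: C) {r : ℕ} (hr : r < (blk b).length)
    (hN : (Fl A).length + r + 15 ≤ (Fl s).length) :
    isB (((Fl s).drop ((Fl A).length + r)).take 15) = true ↔ r + 11 = (blk b).length := by
  obtain ⟨l, rest, hl, -, hbl, hF, hrest⟩ := local_split A b C 1
  have hp := hs.path 2 A (b :: C) h (by simp)
  rw [← hl] at hp
  rw [← h] at hF
  have hlen := congrArg List.length hF
  simp at hlen
  have hle : r + 15 ≤ (Fl l).length := by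
    rcases hrest with e | e
    · subst e; simp [Fl] at hlen; omega
    · omega
  rw [hF, take_drop_local _ _ _ _ _ (Or.inr hle), ← hbl]
  exact chkB_spec hp (by omega) hle

theorem split_at {s : List Sy} {k : ℕ} (hk : k < s.length) :
    s = s.take k ++ s[k] :: s.drop (k + 1) := by simp

theorem Fl_take_succ {s : List Sy} {k : ℕ} (hk : k < s.length) :
    (Fl (s.take (k + 1))).length = (Fl (s.take k)).length + (blk s[k]).length := by
  rw [← List.take_concat_get' s k hk, Fl_append]
  simp [Fl]

theorem Good.sync {s : List Sy} (hs : Good s) {j : ℕ} (h1 : 11 ≤ j) (h2 : j + 4 ≤ (Fl s).length) :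
    isB (((Fl s).drop (j - 11)).take 15) = true ↔
      ∃ k ≤ s.length, (Fl (s.take k)).length = j := by
  constructor
  · intro h
    obtain ⟨A, b, C, r, hsA, hr, hir⟩ := locate s (j - 11) (by omega)
    rw [hir, hs.isB_iff hsA hr (by omega)] at h
    refine ⟨A.length + 1, by simp [hsA], ?_⟩
    have : s.take (A.length + 1) = A ++ [b] := by
      rw [hsA, show A ++ b :: C = (A ++ [b]) ++ C by simp]
      exact List.take_left' (by simp)
    rw [this, Fl_append]
    simp [Fl]; omega
  · rintro ⟨k, hk, hj⟩
    rcases k with _ | k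
    · simp [Fl] at hj; omega
    have hk' : k < s.length := hk
    rw [Fl_take_succ hk'] at hj
    have hb := blk_len s[k]
    have e : j - 11 = (Fl (s.take k)).length + ((blk s[k]).length - 11) := by omega
    rw [e]
    refine (hs.isB_iff (split_at hk') (by omega) (by omega)).2 (by omega)

theorem blk_first (a : Sy) : (blk a)[0]? = some (lt a) := by cases a <;> rfl

theorem blk_last (a : Sy) : (blk a)[(blk a).length - 1]? = some (lt a) := by cases a <;> rfl

theorem Good.get {s : List Sy} {k : ℕ} (hk : k < s.length) (j : ℕ)
    (hj : j < (blk s[k]).length) : (Fl s)[(Fl (s.take k)).length + j]? = (blk s[k])[j]? := by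
  have h : Fl s = Fl (s.take k) ++ (blk s[k] ++ Fl (s.drop (k + 1))) := by
    conv_lhs => rw [split_at hk]
    rw [Fl_append, Fl]
  rw [h, List.getElem?_append_right (by omega), Nat.add_sub_cancel_left,
    List.getElem?_append_left hj]

theorem sq_of_get {α : Type*} {X : List α} (hX : SqFree X) (a m : ℕ) (hm : 0 < m)
    (hl : a + 2 * m ≤ X.length) (h : ∀ t < m, X[a + t]? = X[a + m + t]?) : False := by
  have e : (X.drop a).take m = (X.drop (a + m)).take m := by
    apply List.ext_getElem?
    intro t
    rw [List.getElem?_take, List.getElem?_take]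
    split
    · rw [List.getElem?_drop, List.getElem?_drop]; exact h t (by assumption)
    · rfl
  have hne : (X.drop a).take m ≠ [] := by
    intro h
    have := congrArg List.length h
    simp at this
    omega
  apply hX _ hne
  refine ⟨X.take a, X.drop (a + m + m), ?_⟩
  nth_rewrite 2 [e]
  rw [List.append_assoc, List.append_assoc, ← List.drop_drop (i := m) (j := a + m),
    List.take_append_drop, ← List.drop_drop (i := m) (j := a), List.take_append_drop,
    List.take_append_drop]

theorem Good.sqfree {s : List Sy} (hs : Good s) : SqFree (Fl s) := by
  rintro u hu ⟨X, Y, hXY⟩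
  have hq0 : 1 ≤ u.length := List.length_pos_iff.2 hu
  have hlen := congrArg List.length hXY
  simp at hlen
  have hp : ∀ t < u.length, (Fl s)[X.length + t]? = (Fl s)[X.length + u.length + t]? := by
    intro t ht
    have e1 : (X ++ (u ++ (u ++ Y)))[X.length + t]? = u[t]? := by
      rw [List.getElem?_append_right (by omega), Nat.add_sub_cancel_left,
        List.getElem?_append_left ht]
    have e2 : (X ++ (u ++ (u ++ Y)))[X.length + u.length + t]? = u[t]? := by
      rw [List.getElem?_append_right (by omega),
        show X.length + u.length + t - X.length = u.length + t by omega,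
        List.getElem?_append_right (by omega), Nat.add_sub_cancel_left,
        List.getElem?_append_left ht]
    rw [← hXY, List.append_assoc, List.append_assoc, e1, e2]
  by_cases hq : u.length ≤ 42
  · exact no_short hs hq0 hq (by omega) hp
  · refine abs_lemma (fun j => (Fl s)[j]?) (fun k => (s.map lt)[k]?)
      (fun k => (Fl (s.take k)).length) s.length (Fl s).length (by simp [Fl]) (by simp)
      ?_ ?_ ?_ ?_ ?_ ?_ ?_ X.length u.length (by omega) (by omega) hp
    · intro k hk
      have := blk_len s[k]
      simp only [Fl_take_succ hk]; omega
    · intro k hk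
      have := blk_len s[k]
      simp only [Fl_take_succ hk]; omega
    · intro k h1 h2
      have hk : k < s.length := by omega
      have hb := blk_len s[k]
      have : s[k] ≠ pp := by
        intro e
        have := (hs.hpp _ _ _ (split_at hk)).1 e
        rcases this with e | e
        · have := congrArg List.length e
          simp at this
          rcases this with e | e
          · omega
          · simp [e] at hk
        · have := congrArg List.length e
          simp at this
          omega
      have := hb.2.2 this
      simp only [Fl_take_succ hk]; omega
    · intro k hk
      have hb := blk_len s[k]
      have := Good.get hk 0 (by omega)
      simp only [add_zero] at this
      simp only [this, blk_first]
      simp [hk]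
    · intro k hk
      have hb := blk_len s[k]
      have := Good.get hk ((blk s[k]).length - 1) (by omega)
      simp only [Fl_take_succ hk]
      rw [show (Fl (s.take k)).length + (blk s[k]).length - 1 =
        (Fl (s.take k)).length + ((blk s[k]).length - 1) by omega, this, blk_last]
      simp [hk]
    · intro j j' h1 h2 h3 h4 h5 h6
      have h6 := (hs.sync h1 h2).2 h6
      apply (hs.sync h3 h4).1
      rw [← h6]
      congr 1
      apply List.ext_getElem?
      intro t
      rw [List.getElem?_take, List.getElem?_take]
      split
      · rw [List.getElem?_drop, List.getElem?_drop]; exact (h5 t (by assumption)).symm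
      · rfl
    · intro a m hm ham h
      exact sq_of_get hs.hsq a m hm (by simpa using ham) h

theorem Good.occ {s t : List Sy} (hs : Good s) (hst : s = pp :: (t ++ [pp]))
    {u : List (Fin 3)} (hu : u.length = 19) {o : ℕ} (ho : o < 39) (hc : chkO u o = true) :
    occCount u (Fl s) = 2 := by
  have hbp : (blk pp).length = 39 := rfl
  have hlen : (Fl s).length = 39 + (Fl t).length + 39 := by
    rw [hst]; simp [Fl, Fl_append, hbp]; omega
  have key : ∀ A b C, s = A ++ b :: C → ∀ r < (blk b).length,
      (((Fl s).drop ((Fl A).length + r)).take 19 = u ↔ (b = pp ∧ r = o)) := by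
    intro A b C h r hr
    obtain ⟨l, rest, hl, hh, hbl, hF, hrest⟩ := local_split A b C 1
    have hp := hs.path 2 A (b :: C) h (by simp)
    rw [← hl] at hp
    rw [← h] at hF
    have hrest' : Fl rest = [] ∨ r + 19 ≤ (Fl l).length := by
      rcases hrest with e | e
      · left; simp [e, Fl]
      · right; omega
    rw [hF, take_drop_local _ _ _ _ _ hrest',
      chkO_spec hc hp (by omega), hh]
    simp
  have key2 : ∀ i < (Fl s).length, (((Fl s).drop i).take 19 = u ↔
      (i = o ∨ i = 39 + (Fl t).length + o)) := by
    intro i hi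
    constructor
    · intro h
      obtain ⟨A, b, C, r, hsA, hr, hir⟩ := locate s i hi
      rw [hir, key A b C hsA r hr] at h
      obtain ⟨rfl, rfl⟩ := h
      rcases (hs.hpp A _ C hsA).1 rfl with e | e
      · left; simp [hir, e, Fl]
      · right
        subst e
        have : (pp :: t) ++ [pp] = A ++ [pp] := by rw [← hsA, hst]; simp
        have := (List.append_inj' this rfl).1
        rw [hir, ← this]
        simp [Fl, hbp]
    · rintro (e | e)
      · have := (key [] pp (t ++ [pp]) hst o (by omega)).2 ⟨rfl, rfl⟩
        rw [e]
        simpa [Fl] using this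
      · have := (key (pp :: t) pp [] (by simp [hst]) o (by omega)).2 ⟨rfl, rfl⟩
        rw [e]
        simpa [Fl, hbp] using this
  unfold occCount
  rw [List.countP_eq_length_filter, hu]
  have : ((List.range (Fl s).length).filter (fun i => ((Fl s).drop i).take 19 == u)).Perm
      [o, 39 + (Fl t).length + o] := by
    rw [List.perm_ext_iff_of_nodup (List.nodup_range.filter _) (by simp)]
    intro i
    simp only [List.mem_filter, List.mem_range, beq_iff_eq, List.mem_cons, List.not_mem_nil,
      or_false]
    constructor
    · rintro ⟨h1, h2⟩
      exact (key2 i h1).1 h2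
    · intro h
      have h1 : i < (Fl s).length := by omega
      exact ⟨h1, (key2 i h1).2 h⟩
  rw [this.length_eq]
  rfl

theorem to_sy {w : List (Fin 3)} {vs : List (List (Fin 3))}
    (h : List.Forall₂ (fun c u => u ∈ himg c) w vs) :
    ∃ t : List Sy, t.map lt = w ∧ Fl t = vs.flatten ∧ pp ∉ t := by
  induction h with
  | nil => exact ⟨[], rfl, rfl, by simp⟩
  | @cons c u w vs hcu _ ih =>
    obtain ⟨t, h1, h2, h3⟩ := ih
    have : ∃ b, lt b = c ∧ blk b = u ∧ b ≠ pp := by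
      fin_cases c
      · rcases hcu with e | e
        · exact ⟨a0, rfl, e.symm, by simp⟩
        · exact ⟨a1, rfl, (Set.mem_singleton_iff.1 e).symm, by simp⟩
      · rcases hcu with e | e
        · exact ⟨b0, rfl, e.symm, by simp⟩
        · exact ⟨b1, rfl, (Set.mem_singleton_iff.1 e).symm, by simp⟩
      · rcases hcu with e | e
        · exact ⟨c0, rfl, e.symm, by simp⟩
        · exact ⟨c1, rfl, (Set.mem_singleton_iff.1 e).symm, by simp⟩
    obtain ⟨b, hb1, hb2, hb3⟩ := this
    exact ⟨b :: t, by simp [h1, hb1], by simp [Fl, h2, hb2], by simp [h3, hb3.symm]⟩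

theorem pal_eq : pal = blk pp := by decide +kernel

theorem main (w : List (Fin 3))
    (hsf : SqFree ([1, 0] ++ w ++ [0, 1]))
    (v : List (Fin 3)) (hv : IsImage ([0] ++ w ++ [0]) v) :
    IsNice v := by
  obtain ⟨vs, hvs, rfl⟩ := hv
  obtain ⟨t, h1, h2, h3⟩ := to_sy hvs
  have hF : pal ++ vs.flatten ++ pal = Fl (pp :: (t ++ [pp])) := by
    simp [Fl, Fl_append, h2, pal_eq]
  have hm : (pp :: (t ++ [pp])).map lt = 1 :: 0 :: (w ++ [0, 1]) := by
    simp [h1, lt]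
  have hs : Good (pp :: (t ++ [pp])) := by
    refine ⟨?_, ?_, w, hm⟩
    · intro A b C h
      rcases A with _ | ⟨a, A⟩
      · simp at h; simp [h.1]
      · simp only [List.cons_append, List.cons.injEq] at h
        rcases List.eq_nil_or_concat C with e | ⟨D, d, e⟩
        · subst e
          have := (List.append_inj' h.2 rfl).2
          simp at this
          simp [this]
        · have h' : t ++ [pp] = (A ++ b :: D) ++ [d] := by rw [h.2, e]; simp
          have := (List.append_inj' h' rfl).1
          have hb : b ≠ pp := by
            rintro rfl
            apply h3
            rw [this]; simp
          simp [hb, e]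
    · rw [hm]; simpa using hsf
  unfold IsNice
  rw [hF]
  exact ⟨hs.sqfree, hs.occ rfl rfl (by omega) cO1, hs.occ rfl rfl (by omega) cO2⟩

end NiceProof

/-- If `|w| ≥ 4` and `10w01` is square-free, then every image of `0w0` under `h`
is a nice word. -/
theorem image_is_nice (w : List (Fin 3)) (hlen : 4 ≤ w.length)
    (hsf : SqFree ([1, 0] ++ w ++ [0, 1]))
    (v : List (Fin 3)) (hv : IsImage ([0] ++ w ++ [0]) v) :
    IsNice v := by
  exact NiceProof.main w hsf v hv
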